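/- Let n ≥ 1 and q ≠ 0, and let x_1,…,x_n be arbitrary weights. The characteristic polynomial of the n!×n! transition matrix of T_{S_n}(q,x) equals ∏_{S ⊆ {1,…,n}} (t − λ_S(q,x))^{d_{n−|S|}}, where for S = {i_1 > i_2 > ⋯ > i_k} one sets λ_S(q,x) = ∑_{j=1}^k x_{i_j}/q^{n−i_j−j+1} (with λ_∅ = 0), and d_m = m!·∑_{r=0}^m (−1)^r/r! is the m-th derangement number. In particular the eigenvalue λ_S(q,x) occurs with algebraic multiplicity d_{n−|S|}. Moreover, if the values λ_S(q,x) are pairwise distinct as S ranges over all subsets of {1,…,n}, then the matrix T_{S_n}(q,x) is diagonalizable. -/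

import Mathlib

/-!
STATEMENT 2: characteristic polynomial of the q-Tsetlin library on permutations.
-/

open scoped Classical

noncomputable section

namespace QTsetlin

variable {K : Type} [Field K]

/-- Matrix (row convention: row `π` is `π · T_{k+1}`) of the Hecke generator `T_{k+1}`
(paper indexing), which swaps the (0-based) positions `k` and `k+1`. -/
def genMat (n : ℕ) (q : K) (k : ℕ) :
    Matrix (Equiv.Perm (Fin n)) (Equiv.Perm (Fin n)) K := fun π σ =>
  if h : k + 1 < n then
    if π ⟨k + 1, h⟩ < π ⟨k, Nat.lt_of_succ_lt h⟩ then
      (if σ = π * Equiv.swap ⟨k, Nat.lt_of_succ_lt h⟩ ⟨k + 1, h⟩ then q else 0)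
    else
      (if σ = π * Equiv.swap ⟨k, Nat.lt_of_succ_lt h⟩ ⟨k + 1, h⟩ then 1 else 0)
        + (if σ = π then q - 1 else 0)
  else 0

/-- Matrix of the product `T_k T_{k-1} ⋯ T_1` (paper indexing); `prodGen 0 = 1`. -/
def prodGen (n : ℕ) (q : K) : ℕ → Matrix (Equiv.Perm (Fin n)) (Equiv.Perm (Fin n)) K
  | 0 => 1
  | k + 1 => genMat n q k * prodGen n q k

/-- Matrix of the weighting operator `X_{S_n}(q,x)`: `π ↦ (x_{π_1}/q^{n-π_1}) · π`. -/
def XSn (n : ℕ) (q : K) (x : Fin n → K) :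
    Matrix (Equiv.Perm (Fin n)) (Equiv.Perm (Fin n)) K := fun π σ =>
  if σ = π then
    (if h : 0 < n then x (π ⟨0, h⟩) / q ^ (n - 1 - (π ⟨0, h⟩ : ℕ)) else 0)
  else 0

/-- Matrix of the q-Tsetlin library operator
`T_{S_n}(q,x) = (∑_{i=1}^n T_{i-1} ⋯ T_1) ∘ X_{S_n}(q,x)` on `ℂS_n` (row convention). -/
def TSn (n : ℕ) (q : K) (x : Fin n → K) :
    Matrix (Equiv.Perm (Fin n)) (Equiv.Perm (Fin n)) K :=
  (∑ k ∈ Finset.range n, prodGen n q k) * XSn n q x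

/-- The eigenvalue `λ_S(q,x) = ∑_{j=1}^k x_{i_j} / q^{n - i_j - j + 1}` attached to a subset
`S = {i_1 > i_2 > ⋯ > i_k}` of `{1,…,n}`; for `i ∈ S`, its 1-based rank in the decreasing
order is the number of elements of `S` that are `≥ i`. -/
def lambdaS (n : ℕ) (q : K) (x : Fin n → K) (S : Finset (Fin n)) : K :=
  ∑ i ∈ S, x i /
    q ^ ((n : ℤ) - ((i : ℕ) + 1) - ((S.filter fun t => i ≤ t).card : ℤ) + 1)

/-- The `m`-th derangement number `d_m = m! ∑_{r=0}^m (-1)^r / r!`, written as the integer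
`∑_{r=0}^m (-1)^r · (m!/r!) = ∑_{r=0}^m (-1)^r ∏_{t=r+1}^m t`. -/
def derangeNum (m : ℕ) : ℤ :=
  ∑ r ∈ Finset.range (m + 1), (-1) ^ r * ∏ t ∈ Finset.Icc (r + 1) m, (t : ℤ)

/-!
Put `y_a = x_a / q^{n-a}`. The sum of the Hecke products `T_{i-1} ⋯ T_1` brings each letter of a
word in turn to the front, so on multilinear elements of the free algebra the operator is
`∑ₐ yₐ a ∂ₐ`, where the `q`-derivations `∂ₐ` satisfy `∂_b ∂_a = q ∂_a ∂_b` for `a < b`.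

For sets of letters `P < C`, let `V(P, C)` be the space of multilinear elements on `P ∪ C` killed
by `∂_c` for all `c ∈ C`. If `P < a < C`, then `∂ₐ` gives an exact sequence
`0 → V(P, C ∪ {a}) → V(P ∪ {a}, C) → V(P, C) → 0`,
on which the operator with weights `y` induces itself on the left and `yₐ` plus the operator with
weights `q y` on the right. Peeling off the letters of `P` from the largest one down therefore
filters `V(P, C)`, with one graded piece for each `S ⊆ P`, isomorphic to `V(∅, C ∪ (P \ S))`, on
which the operator acts as the scalar `λ_S`. The dimension of `V(P, C)` is the `|C|`-th difference
of the factorial at `|P|`, which for `P = ∅` is a derangement number. The filtration also shows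
that `∏_S (T - λ_S) = 0`, whence diagonalizability as soon as the `λ_S` are distinct.
-/

section LinearAlgebra

open Polynomial

variable {R U V W : Type*} [CommRing R] [AddCommGroup U] [AddCommGroup V] [AddCommGroup W]
  [Module R U] [Module R V] [Module R W]

lemma charpoly_prodMap_add_inl_comp_snd [Module.Free R U] [Module.Finite R U] [Module.Free R W]
    [Module.Finite R W] (φ : Module.End R U) (ψ : Module.End R W) (ν : W →ₗ[R] U) :
    (φ.prodMap ψ + LinearMap.inl R U W ∘ₗ ν ∘ₗ LinearMap.snd R U W).charpoly =
      φ.charpoly * ψ.charpoly := by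
  let b := Module.Free.chooseBasis R U
  let c := Module.Free.chooseBasis R W
  have hblocks : LinearMap.toMatrix (b.prod c) (b.prod c)
      (φ.prodMap ψ + LinearMap.inl R U W ∘ₗ ν ∘ₗ LinearMap.snd R U W) =
      Matrix.fromBlocks (LinearMap.toMatrix b b φ) (LinearMap.toMatrix c b ν) 0
        (LinearMap.toMatrix c c ψ) := by
    ext (i | i) (j | j) <;> simp [LinearMap.toMatrix_apply]
  rw [← LinearMap.charpoly_toMatrix _ (b.prod c), hblocks, Matrix.charpoly_fromBlocks_zero₂₁,
    LinearMap.charpoly_toMatrix, LinearMap.charpoly_toMatrix]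

lemma charpoly_algebraMap [Nontrivial R] [Module.Free R V] [Module.Finite R V] (z : R) :
    (algebraMap R (Module.End R V) z).charpoly = (X - C z) ^ Module.finrank R V := by
  let b := Module.Free.chooseBasis R V
  rw [← LinearMap.charpoly_toMatrix _ b, LinearMap.toMatrix_algebraMap, Matrix.scalar_apply,
    Matrix.charpoly_diagonal, Finset.prod_const, Finset.card_univ, Module.finrank_eq_card_basis b]

section Exact

variable {i : U →ₗ[R] V} {p : V →ₗ[R] W} {φ : Module.End R U} {f : Module.End R V}
  {ψ : Module.End R W}

lemma charpoly_eq_mul_of_exact [Module.Free R U] [Module.Finite R U] [Module.Free R V]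
    [Module.Finite R V] [Module.Free R W] [Module.Finite R W] (hi : Function.Injective i)
    (hip : Function.Exact i p) (hp : Function.Surjective p) (hφ : f ∘ₗ i = i ∘ₗ φ)
    (hψ : p ∘ₗ f = ψ ∘ₗ p) : f.charpoly = φ.charpoly * ψ.charpoly := by
  obtain ⟨s, hs⟩ := Module.projective_lifting_property p LinearMap.id hp
  obtain ⟨e, hei, hep⟩ := hip.splitSurjectiveEquiv hi ⟨s, hs⟩
  let ν : W →ₗ[R] U := LinearMap.fst R U W ∘ₗ e.conj f ∘ₗ LinearMap.inr R U W
  have he_i (u : U) : e (i u) = (u, 0) := by simp [hei]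
  have he_p (v : V) : (e v).2 = p v := by simp [hep]
  have hconj : e.conj f = φ.prodMap ψ + LinearMap.inl R U W ∘ₗ ν ∘ₗ LinearMap.snd R U W := by
    refine LinearMap.prod_ext ?_ ?_
    · ext u : 1
      have : e.symm (u, 0) = i u := by rw [← he_i, e.symm_apply_apply]
      have hfi : f (i u) = i (φ u) := LinearMap.congr_fun hφ u
      simp [LinearEquiv.conj_apply, this, hfi, he_i]
    · ext w : 1
      have hpf : p (f (e.symm (0, w))) = ψ w := by
        rw [← LinearMap.comp_apply, hψ, LinearMap.comp_apply, ← he_p, e.apply_symm_apply]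
      ext
      · simp [ν]
      · simp [LinearEquiv.conj_apply, he_p, hpf]
  rw [← LinearEquiv.charpoly_conj e, hconj, charpoly_prodMap_add_inl_comp_snd]

lemma aeval_comp_eq_comp_aeval {g : V →ₗ[R] W} (h : g ∘ₗ f = ψ ∘ₗ g) (r : R[X]) :
    g ∘ₗ aeval f r = aeval ψ r ∘ₗ g := by
  induction r using Polynomial.induction_on' with
  | add r s hr hs => simp only [map_add, LinearMap.comp_add, LinearMap.add_comp, hr, hs]
  | monomial k c =>
    have hpow : (ψ ^ k : Module.End R W) ∘ₗ g = g ∘ₗ (f ^ k : Module.End R V) :=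
      Module.End.commute_pow_left_of_commute h.symm k
    simp only [aeval_monomial, ← Algebra.smul_def, LinearMap.comp_smul, LinearMap.smul_comp, hpow]

lemma aeval_mul_eq_zero_of_exact (hip : Function.Exact i p) (hφ : f ∘ₗ i = i ∘ₗ φ)
    (hψ : p ∘ₗ f = ψ ∘ₗ p) {r s : R[X]} (hr : aeval φ r = 0) (hs : aeval ψ s = 0) :
    aeval f (r * s) = 0 := by
  ext v
  have hker : p (aeval f s v) = 0 := by
    rw [← LinearMap.comp_apply, aeval_comp_eq_comp_aeval hψ, hs, LinearMap.zero_comp,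
      LinearMap.zero_apply]
  obtain ⟨u, hu⟩ := (hip _).1 hker
  rw [map_mul, Module.End.mul_apply, ← hu, ← LinearMap.comp_apply,
    ← aeval_comp_eq_comp_aeval hφ.symm, hr, LinearMap.comp_zero, LinearMap.zero_apply,
    LinearMap.zero_apply]

end Exact

end LinearAlgebra

section Diagonalization

open Polynomial

variable {R F V ι κ : Type*} [CommRing R] [Field F] [AddCommGroup V] [Module F V]

lemma ker_aeval_prod_X_sub_C (f : Module.End F V) {μ : κ → F} (hμ : Function.Injective μ)
    (s : Finset κ) :
    LinearMap.ker (aeval f (∏ i ∈ s, (X - C (μ i)))) = ⨆ i ∈ s, f.eigenspace (μ i) := by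
  induction s using Finset.induction_on with
  | empty => simp [Module.End.one_eq_id]
  | insert i s hi ih =>
    have hcoprime : IsCoprime (X - C (μ i)) (∏ j ∈ s, (X - C (μ j))) :=
      IsCoprime.prod_right fun j hj =>
        pairwise_coprime_X_sub_C hμ (ne_of_mem_of_not_mem hj hi).symm
    rw [Finset.prod_insert hi, ← sup_ker_aeval_eq_ker_aeval_mul_of_coprime f hcoprime, ih,
      Finset.iSup_insert, Module.End.eigenspace_def]
    simp [Algebra.algebraMap_eq_smul_one]

variable [Fintype ι] [DecidableEq ι]

lemma exists_eq_conj_isDiag_of_transpose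
    {M : Matrix ι ι R}
    (h : ∃ P D : Matrix ι ι R, IsUnit P.det ∧ D.IsDiag ∧ M.transpose = P * D * P⁻¹) :
    ∃ P D : Matrix ι ι R, IsUnit P.det ∧ D.IsDiag ∧ M = P * D * P⁻¹ := by
  obtain ⟨P, D, hP, hD, hM⟩ := h
  have hPT : IsUnit P.transpose.det := by rwa [Matrix.det_transpose]
  refine ⟨P.transpose⁻¹, D, Matrix.isUnit_nonsing_inv_det _ hPT, hD, ?_⟩
  rw [← M.transpose_transpose, hM, Matrix.transpose_mul, Matrix.transpose_mul, hD.isSymm.eq,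
    Matrix.nonsing_inv_nonsing_inv _ hPT, Matrix.transpose_nonsing_inv, mul_assoc]

lemma exists_toMatrix_eq_conj_isDiag (b : Module.Basis ι F V) {f : Module.End F V}
    (hf : ⨆ μ, f.eigenspace μ = ⊤) :
    ∃ P D : Matrix ι ι F, IsUnit P.det ∧ D.IsDiag ∧ LinearMap.toMatrix b b f = P * D * P⁻¹ := by
  have hspan : ⊤ ≤ Submodule.span F (⋃ μ, (f.eigenspace μ : Set V)) := by
    rw [← Submodule.iSup_eq_span, hf]
  let c₀ := Module.Basis.ofSpan hspan
  let c : Module.Basis ι F V := c₀.reindex (c₀.indexEquiv b)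
  have heigen (j : ι) : ∃ μ : F, f (c j) = μ • c j := by
    have hc : c j ∈ ⋃ μ, (f.eigenspace μ : Set V) :=
      Module.Basis.ofSpan_subset hspan ⟨(c₀.indexEquiv b).symm j, by simp [c, c₀]⟩
    obtain ⟨μ, hμ⟩ := Set.mem_iUnion.1 hc
    exact ⟨μ, Module.End.mem_eigenspace_iff.1 hμ⟩
  choose μ hμ using heigen
  have hmul : b.toMatrix c * c.toMatrix b = 1 := b.toMatrix_mul_toMatrix_flip c
  refine ⟨b.toMatrix c, LinearMap.toMatrix c c f, ?_, fun i j hij => ?_, ?_⟩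
  · exact (Matrix.isUnit_iff_isUnit_det _).1 (IsUnit.of_mul_eq_one _ hmul)
  · simp [LinearMap.toMatrix_apply, hμ, Ne.symm hij]
  · rw [Matrix.inv_eq_right_inv hmul,
      basis_toMatrix_mul_linearMap_toMatrix_mul_basis_toMatrix]

lemma exists_toMatrix_eq_conj_isDiag_of_aeval_eq_zero (b : Module.Basis ι F V)
    {f : Module.End F V} {μ : κ → F} (hμ : Function.Injective μ) (s : Finset κ)
    (hf : aeval f (∏ i ∈ s, (X - C (μ i))) = 0) :
    ∃ P D : Matrix ι ι F, IsUnit P.det ∧ D.IsDiag ∧ LinearMap.toMatrix b b f = P * D * P⁻¹ := by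
  refine exists_toMatrix_eq_conj_isDiag b (eq_top_iff.2 ?_)
  rw [← LinearMap.ker_eq_top.2 hf, ker_aeval_prod_X_sub_C f hμ s]
  exact iSup₂_le fun i _ => le_iSup f.eigenspace (μ i)

end Diagonalization

lemma fwdDiff_iter_factorial (m : ℕ) :
    (fwdDiff 1)^[m] (fun k : ℕ => (k.factorial : ℤ)) 0 = derangeNum m := by
  rw [fwdDiff_iter_eq_sum_shift, ← Finset.sum_range_reflect, derangeNum]
  refine Finset.sum_congr rfl fun r hr => ?_
  have hrm : r ≤ m := by simpa [Nat.lt_succ_iff] using hr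
  have hprod : ∏ t ∈ Finset.Icc (r + 1) m, t = m.choose r * (m - r).factorial := by
    refine Nat.eq_of_mul_eq_mul_left r.factorial_pos ?_
    rw [← mul_assoc, mul_comm r.factorial (m.choose r), Nat.choose_mul_factorial_mul_factorial hrm,
      ← Finset.prod_Ico_id_eq_factorial, ← Finset.prod_Ico_id_eq_factorial,
      ← Finset.Ico_add_one_right_eq_Icc, Finset.prod_Ico_consecutive _ (by omega) (by omega)]
  have hsub : m - (m - r) = r := by omega
  simp [hsub, Nat.choose_symm hrm, mul_assoc, ← Nat.cast_mul, ← hprod]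

section Words

variable {R α : Type*} [CommRing R]

/-- The word `l`, as a monomial of the free algebra on the alphabet. -/
def word (R : Type*) [CommRing R] (l : List α) : FreeAlgebra R α :=
  (l.map (FreeAlgebra.ι R)).prod

@[simp]
lemma word_nil : word R ([] : List α) = 1 := rfl

lemma word_cons (a : α) (l : List α) : word R (a :: l) = FreeAlgebra.ι R a * word R l := by
  simp [word]

/-- The basis of the free algebra formed by the words. -/
def wordBasis (R α : Type*) [CommRing R] : Module.Basis (List α) R (FreeAlgebra R α) :=
  (FreeAlgebra.basisFreeMonoid R α).reindex FreeMonoid.toList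

@[simp]
lemma wordBasis_apply (l : List α) : wordBasis R α l = word R l := by
  simp [wordBasis, word, FreeAlgebra.basisFreeMonoid, FreeAlgebra.equivMonoidAlgebraFreeMonoid]

lemma linearIndependent_word : LinearIndependent R (word R : List α → FreeAlgebra R α) := by
  simpa only [funext wordBasis_apply] using (wordBasis R α).linearIndependent

/-- The linear map with prescribed values on words. -/
def ofWords {M : Type*} [AddCommGroup M] [Module R M] (g : List α → M) : FreeAlgebra R α →ₗ[R] M :=
  (wordBasis R α).constr R g

@[simp]
lemma ofWords_word {M : Type*} [AddCommGroup M] [Module R M] (g : List α → M) (l : List α) :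
    ofWords g (word R l) = g l := by
  rw [← wordBasis_apply, ofWords, Module.Basis.constr_basis]

lemma hom_ext_word {M : Type*} [AddCommGroup M] [Module R M] {f g : FreeAlgebra R α →ₗ[R] M}
    (h : ∀ l, f (word R l) = g (word R l)) : f = g :=
  (wordBasis R α).ext fun l => by simpa using h l

end Words

section QDerivations

variable {R α : Type*} [CommRing R] [LinearOrder α] [LocallyFiniteOrderTop α] (q : R)

/-- The values of the `q`-derivation `qDeriv` on words. -/
def qDerivWord : List α → α → FreeAlgebra R α
  | [], _ => 0
  | b :: l, a =>
    if a = b then word R l + (q - 1) • ∑ c ∈ Finset.Ioi a, FreeAlgebra.ι R c * qDerivWord l c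
    else (if a < b then q else 1) • (FreeAlgebra.ι R b * qDerivWord l a)

/-- The `q`-derivation `∂ₐ`. On words without repeated letters, `∂ₐ w` is what follows the initial
letter `a` in the sum of the Hecke products `T_k ⋯ T_1` applied to `w`. -/
def qDeriv (a : α) : Module.End R (FreeAlgebra R α) :=
  ofWords fun l => qDerivWord q l a

@[simp]
lemma qDeriv_one (a : α) : qDeriv q a 1 = 0 := by
  rw [← word_nil, qDeriv, ofWords_word, qDerivWord]

lemma qDeriv_ι_mul_self (a : α) (u : FreeAlgebra R α) :
    qDeriv q a (FreeAlgebra.ι R a * u) =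
      u + (q - 1) • ∑ c ∈ Finset.Ioi a, FreeAlgebra.ι R c * qDeriv q c u := by
  have h : qDeriv q a ∘ₗ LinearMap.mulLeft R (FreeAlgebra.ι R a) = LinearMap.id +
      (q - 1) • ∑ c ∈ Finset.Ioi a, LinearMap.mulLeft R (FreeAlgebra.ι R c) ∘ₗ qDeriv q c :=
    hom_ext_word fun l => by
      simp [← word_cons, qDeriv, qDerivWord, LinearMap.sum_apply]
  simpa [LinearMap.sum_apply] using LinearMap.congr_fun h u

lemma qDeriv_ι_mul_of_ne {a b : α} (hab : a ≠ b) (u : FreeAlgebra R α) :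
    qDeriv q a (FreeAlgebra.ι R b * u) =
      (if a < b then q else 1) • (FreeAlgebra.ι R b * qDeriv q a u) := by
  have h : qDeriv q a ∘ₗ LinearMap.mulLeft R (FreeAlgebra.ι R b) =
      (if a < b then q else 1) • LinearMap.mulLeft R (FreeAlgebra.ι R b) ∘ₗ qDeriv q a :=
    hom_ext_word fun l => by
      simp only [LinearMap.comp_apply, LinearMap.mulLeft_apply, LinearMap.smul_apply, ← word_cons,
        qDeriv, ofWords_word, qDerivWord, if_neg hab]
  exact LinearMap.congr_fun h u

lemma qDeriv_ι_mul_of_lt {a b : α} (hab : a < b) (u : FreeAlgebra R α) :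
    qDeriv q a (FreeAlgebra.ι R b * u) = q • (FreeAlgebra.ι R b * qDeriv q a u) := by
  rw [qDeriv_ι_mul_of_ne q hab.ne, if_pos hab]

lemma qDeriv_ι_mul_of_gt {a b : α} (hba : b < a) (u : FreeAlgebra R α) :
    qDeriv q a (FreeAlgebra.ι R b * u) = FreeAlgebra.ι R b * qDeriv q a u := by
  rw [qDeriv_ι_mul_of_ne q hba.ne', if_neg hba.not_gt, one_smul]

end QDerivations

section Multilinear

variable {R α : Type*} [CommRing R] [DecidableEq α]

/-- The multilinear part of the free algebra with letter set `A`: the span of the words in which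
each letter of `A` occurs exactly once, and no other letter occurs. -/
def multilinear (R : Type*) [CommRing R] (A : Finset α) : Submodule R (FreeAlgebra R α) :=
  Submodule.span R (word R '' {l | l.Nodup ∧ l.toFinset = A})

variable {A : Finset α} {a : α} {u : FreeAlgebra R α}

lemma word_mem_multilinear {l : List α} (hl : l.Nodup) : word R l ∈ multilinear R l.toFinset :=
  Submodule.subset_span ⟨l, ⟨hl, rfl⟩, rfl⟩

lemma multilinear_le {p : Submodule R (FreeAlgebra R α)}
    (h : ∀ l : List α, l.Nodup → l.toFinset = A → word R l ∈ p) : multilinear R A ≤ p := by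
  rw [multilinear, Submodule.span_le]
  rintro _ ⟨l, ⟨hl, hlA⟩, rfl⟩
  exact h l hl hlA

lemma ι_mul_mem_multilinear (ha : a ∉ A) (hu : u ∈ multilinear R A) :
    FreeAlgebra.ι R a * u ∈ multilinear R (insert a A) := by
  have h : multilinear R A ≤
      (multilinear R (insert a A)).comap (LinearMap.mulLeft R (FreeAlgebra.ι R a)) := by
    refine multilinear_le fun l hl hlA => ?_
    have hal : a ∉ l := by simpa [← hlA] using ha
    rw [Submodule.mem_comap, LinearMap.mulLeft_apply, ← word_cons, ← hlA, ← List.toFinset_cons]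
    exact word_mem_multilinear (List.nodup_cons.2 ⟨hal, hl⟩)
  exact h hu

lemma ι_mul_mem_multilinear_of_erase (hu : u ∈ multilinear R (A.erase a)) (hz : a ∉ A → u = 0) :
    FreeAlgebra.ι R a * u ∈ multilinear R A := by
  by_cases ha : a ∈ A
  · simpa [Finset.insert_erase ha] using ι_mul_mem_multilinear (Finset.notMem_erase a A) hu
  · simp [hz ha]

lemma setOf_nodup_toFinset_eq (A : Finset α) :
    {l : List α | l.Nodup ∧ l.toFinset = A} = (A.toList.permutations.toFinset : Set (List α)) := by
  ext l
  simp only [Set.mem_ofPred_eq, List.coe_toFinset, List.mem_permutations]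
  constructor
  · rintro ⟨hl, rfl⟩
    exact List.perm_of_nodup_nodup_toFinset_eq hl (Finset.nodup_toList _) (by simp)
  · intro h
    exact ⟨h.nodup_iff.2 A.nodup_toList, by simpa using List.toFinset_eq_of_perm _ _ h⟩

instance : Module.Finite R (multilinear R A) := by
  rw [multilinear, setOf_nodup_toFinset_eq]
  exact Module.Finite.span_of_finite R ((Finset.finite_toSet _).image _)

lemma finrank_multilinear [Nontrivial R] (A : Finset α) :
    Module.finrank R (multilinear R A) = A.card.factorial := by
  have hspan : multilinear R A = Submodule.span R
      (Set.range (word R ∘ ((↑) : A.toList.permutations.toFinset → List α))) := by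
    rw [multilinear, setOf_nodup_toFinset_eq, Set.image_eq_range]
    rfl
  rw [hspan, finrank_span_eq_card (linearIndependent_word.comp _ Subtype.val_injective),
    Fintype.card_coe, List.toFinset_card_of_nodup (List.nodup_permutations _ A.nodup_toList),
    List.length_permutations, Finset.length_toList]

end Multilinear

section QDerivMultilinear

variable {R α : Type*} [CommRing R] [LinearOrder α] [LocallyFiniteOrderTop α] (q : R)
  {A : Finset α} {a b : α} {u : FreeAlgebra R α}

lemma qDeriv_word_eq_zero {l : List α} (ha : a ∉ l) : qDeriv q a (word R l) = 0 := by
  induction l with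
  | nil => rw [word_nil, qDeriv_one]
  | cons b l ih =>
    rw [List.mem_cons, not_or] at ha
    rw [word_cons, qDeriv_ι_mul_of_ne q ha.1, ih ha.2, mul_zero, smul_zero]

lemma qDeriv_eq_zero (ha : a ∉ A) (hu : u ∈ multilinear R A) : qDeriv q a u = 0 := by
  have h : multilinear R A ≤ LinearMap.ker (qDeriv q a) :=
    multilinear_le fun l _ hlA => qDeriv_word_eq_zero q (by simpa [← hlA] using ha)
  exact h hu

lemma qDeriv_word_mem {l : List α} (hl : l.Nodup) (a : α) :
    qDeriv q a (word R l) ∈ multilinear R (l.toFinset.erase a) := by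
  induction l generalizing a with
  | nil => simp
  | cons b l ih =>
    obtain ⟨hb, hl'⟩ := List.nodup_cons.1 hl
    have hbl : b ∉ l.toFinset := by simpa using hb
    rw [word_cons, List.toFinset_cons]
    obtain rfl | hab := eq_or_ne a b
    · rw [qDeriv_ι_mul_self, Finset.erase_insert hbl]
      refine add_mem (word_mem_multilinear hl') (Submodule.smul_mem _ _ (Submodule.sum_mem _ ?_))
      exact fun c _ => ι_mul_mem_multilinear_of_erase (ih hl' c)
        fun hc => qDeriv_word_eq_zero q (by simpa using hc)
    · rw [qDeriv_ι_mul_of_ne q hab, Finset.erase_insert_of_ne hab.symm]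
      exact Submodule.smul_mem _ _
        (ι_mul_mem_multilinear (fun h => hbl (Finset.mem_of_mem_erase h)) (ih hl' a))

lemma qDeriv_mem_multilinear (a : α) (hu : u ∈ multilinear R A) :
    qDeriv q a u ∈ multilinear R (A.erase a) := by
  have h : multilinear R A ≤ (multilinear R (A.erase a)).comap (qDeriv q a) :=
    multilinear_le fun l hl hlA => hlA ▸ qDeriv_word_mem q hl a
  exact h hu

lemma ι_mul_qDeriv_mem_multilinear (a : α) (hu : u ∈ multilinear R A) :
    FreeAlgebra.ι R a * qDeriv q a u ∈ multilinear R A :=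
  ι_mul_mem_multilinear_of_erase (qDeriv_mem_multilinear q a hu) fun ha => qDeriv_eq_zero q ha hu

lemma qDeriv_qDeriv_self (a : α) (hu : u ∈ multilinear R A) : qDeriv q a (qDeriv q a u) = 0 :=
  qDeriv_eq_zero q (Finset.notMem_erase a A) (qDeriv_mem_multilinear q a hu)

lemma qDeriv_sum_Ioi_ι_mul_qDeriv (hab : a < b)
    (hcomm : ∀ c d, c < d → qDeriv q d (qDeriv q c u) = q • qDeriv q c (qDeriv q d u))
    (hsq : qDeriv q b (qDeriv q b u) = 0) :
    qDeriv q b (∑ c ∈ Finset.Ioi a, FreeAlgebra.ι R c * qDeriv q c u) =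
      qDeriv q b u + q • ∑ c ∈ Finset.Ioi a, FreeAlgebra.ι R c * qDeriv q c (qDeriv q b u) := by
  let t (c : α) := FreeAlgebra.ι R c * qDeriv q c (qDeriv q b u)
  have hterm (c : α) : qDeriv q b (FreeAlgebra.ι R c * qDeriv q c u) = q • t c +
      ((if c = b then qDeriv q b u + (q - 1) • ∑ d ∈ Finset.Ioi b, t d else 0) -
        if b < c then (q - 1) • t c else 0) := by
    rcases lt_trichotomy c b with hcb | rfl | hbc
    · simp [qDeriv_ι_mul_of_gt q hcb, hcomm c b hcb, hcb.ne, hcb.not_gt, t]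
    · simp [qDeriv_ι_mul_self, hsq, t]
    · simp only [qDeriv_ι_mul_of_lt q hbc, hcomm b c hbc, hbc.ne', hbc, t, if_true, if_false,
        mul_smul_comm]
      module
  have hfilter : (Finset.Ioi a).filter (b < ·) = Finset.Ioi b := by
    ext c
    simpa using fun hbc => hab.trans hbc
  rw [map_sum, Finset.sum_congr rfl fun c _ => hterm c]
  simp only [Finset.sum_add_distrib, Finset.sum_sub_distrib, Finset.sum_ite_eq', Finset.mem_Ioi,
    hab, if_true, ← Finset.sum_filter, hfilter, ← Finset.smul_sum, t]
  abel

lemma qDeriv_comm_word {l : List α} (hl : l.Nodup) (hab : a < b) :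
    qDeriv q b (qDeriv q a (word R l)) = q • qDeriv q a (qDeriv q b (word R l)) := by
  induction l generalizing a b with
  | nil => simp
  | cons c l ih =>
    replace hl := (List.nodup_cons.1 hl).2
    have hcomm (d e : α) (hde : d < e) := ih hl hde
    have hsq := qDeriv_qDeriv_self q b (word_mem_multilinear (R := R) hl)
    rw [word_cons]
    rcases eq_or_ne a c with rfl | hac
    · rw [qDeriv_ι_mul_self, qDeriv_ι_mul_of_gt q hab, qDeriv_ι_mul_self, map_add, map_smul,
        qDeriv_sum_Ioi_ι_mul_qDeriv q hab hcomm hsq]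
      module
    rcases eq_or_ne b c with rfl | hbc
    · rw [qDeriv_ι_mul_self, qDeriv_ι_mul_of_lt q hab, map_smul, qDeriv_ι_mul_self, map_add,
        map_smul, map_sum]
      congr 3
      refine Finset.sum_congr rfl fun d hd => ?_
      have hbd : b < d := Finset.mem_Ioi.1 hd
      rw [qDeriv_ι_mul_of_lt q (hab.trans hbd), hcomm a d (hab.trans hbd), mul_smul_comm]
    · rw [qDeriv_ι_mul_of_ne q hac, qDeriv_ι_mul_of_ne q hbc, map_smul, map_smul,
        qDeriv_ι_mul_of_ne q hac, qDeriv_ι_mul_of_ne q hbc, hcomm a b hab, mul_smul_comm]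
      module

lemma qDeriv_comm (hu : u ∈ multilinear R A) (hab : a < b) :
    qDeriv q b (qDeriv q a u) = q • qDeriv q a (qDeriv q b u) := by
  have h : multilinear R A ≤
      LinearMap.eqLocus (qDeriv q b ∘ₗ qDeriv q a) (q • (qDeriv q a ∘ₗ qDeriv q b)) :=
    multilinear_le fun l hl _ => LinearMap.mem_eqLocus.2 (by
      simpa only [LinearMap.smul_apply, LinearMap.comp_apply] using qDeriv_comm_word q hl hab)
  simpa only [LinearMap.mem_eqLocus, LinearMap.smul_apply, LinearMap.comp_apply] using h hu

end QDerivMultilinear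

section Tsetlin

variable {R α : Type*} [CommRing R] [LinearOrder α] [LocallyFiniteOrderTop α] [Fintype α] (q : R)

/-- The Tsetlin operator `∑ₐ yₐ a ∂ₐ` on words: with weight `yₐ`, the letter `a` moves to the
front. -/
def tsetlinOp (y : α → R) : Module.End R (FreeAlgebra R α) :=
  ∑ a, y a • (LinearMap.mulLeft R (FreeAlgebra.ι R a) ∘ₗ qDeriv q a)

lemma tsetlinOp_apply (y : α → R) (u : FreeAlgebra R α) :
    tsetlinOp q y u = ∑ a, y a • (FreeAlgebra.ι R a * qDeriv q a u) := by
  simp [tsetlinOp, LinearMap.sum_apply]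

lemma tsetlinOp_smul (c : R) (y : α → R) : tsetlinOp q (c • y) = c • tsetlinOp q y := by
  simp only [tsetlinOp, Finset.smul_sum, Pi.smul_apply, smul_assoc]

variable {A : Finset α} {u : FreeAlgebra R α}

lemma tsetlinOp_mem_multilinear (y : α → R) (hu : u ∈ multilinear R A) :
    tsetlinOp q y u ∈ multilinear R A := by
  rw [tsetlinOp_apply]
  exact Submodule.sum_mem _ fun a _ =>
    Submodule.smul_mem _ _ (ι_mul_qDeriv_mem_multilinear q a hu)

lemma qDeriv_tsetlinOp (y : α → R) {a : α} (hu : u ∈ multilinear R A)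
    (hgt : ∀ c, a < c → qDeriv q c u = 0) :
    qDeriv q a (tsetlinOp q y u) = y a • qDeriv q a u + tsetlinOp q (q • y) (qDeriv q a u) := by
  have hgt' (c : α) (hac : a < c) : qDeriv q c (qDeriv q a u) = 0 := by
    rw [qDeriv_comm q hu hac, hgt c hac, map_zero, smul_zero]
  have hterm (b : α) : qDeriv q a (FreeAlgebra.ι R b * qDeriv q b u) =
      (if b = a then qDeriv q a u else 0) +
        q • (FreeAlgebra.ι R b * qDeriv q b (qDeriv q a u)) := by
    rcases lt_trichotomy b a with hba | rfl | hab
    · rw [qDeriv_ι_mul_of_gt q hba, qDeriv_comm q hu hba, if_neg hba.ne, mul_smul_comm, zero_add]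
    · have hsum : ∑ c ∈ Finset.Ioi b, FreeAlgebra.ι R c * qDeriv q c (qDeriv q b u) = 0 :=
        Finset.sum_eq_zero fun c hc => by rw [hgt' c (Finset.mem_Ioi.1 hc), mul_zero]
      rw [qDeriv_ι_mul_self, hsum, qDeriv_qDeriv_self q b hu, if_pos rfl, mul_zero, smul_zero,
        smul_zero]
    · rw [hgt b hab, hgt' b hab, if_neg hab.ne', mul_zero, map_zero, smul_zero, add_zero]
  rw [tsetlinOp_smul, LinearMap.smul_apply]
  simp only [tsetlinOp_apply, map_sum, map_smul, hterm, smul_add, Finset.sum_add_distrib,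
    Finset.smul_sum, smul_ite, smul_zero, Finset.sum_ite_eq', Finset.mem_univ, if_true,
    smul_comm q]

end Tsetlin

section Order

variable {α : Type*} [Preorder α] {P C : Finset α} {a : α}

lemma forall_lt_of_lt_of_lt (hP : ∀ p ∈ P, p < a) (hC : ∀ c ∈ C, a < c) :
    ∀ p ∈ P, ∀ c ∈ C, p < c :=
  fun p hp c hc => (hP p hp).trans (hC c hc)

lemma forall_insert_lt [DecidableEq α] (hP : ∀ p ∈ P, p < a) (hC : ∀ c ∈ C, a < c) :
    ∀ p ∈ insert a P, ∀ c ∈ C, p < c :=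
  (Finset.forall_mem_insert _ _ _).2 ⟨hC, forall_lt_of_lt_of_lt hP hC⟩

lemma forall_lt_insert [DecidableEq α] (hP : ∀ p ∈ P, p < a) (hC : ∀ c ∈ C, a < c) :
    ∀ p ∈ P, ∀ c ∈ insert a C, p < c :=
  fun p hp => (Finset.forall_mem_insert _ _ _).2 ⟨hP p hp, forall_lt_of_lt_of_lt hP hC p hp⟩

end Order

section PartialKernels

variable {R α : Type*} [CommRing R] [LinearOrder α] [LocallyFiniteOrderTop α] (q : R)

/-- The multilinear elements with letter set `P ∪ C` killed by the `q`-derivations with respect to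
the letters of `C`. These spaces interpolate between `multilinear R P` (for `C = ∅`) and the joint
kernel of all `q`-derivations on `multilinear R C` (for `P = ∅`). -/
def partialKer (P C : Finset α) : Submodule R (FreeAlgebra R α) :=
  multilinear R (P ∪ C) ⊓ ⨅ c ∈ C, LinearMap.ker (qDeriv q c)

variable {q} {P C : Finset α} {a : α} {u : FreeAlgebra R α}

lemma mem_partialKer :
    u ∈ partialKer q P C ↔ u ∈ multilinear R (P ∪ C) ∧ ∀ c ∈ C, qDeriv q c u = 0 := by
  simp [partialKer]

lemma partialKer_empty_right : partialKer q P ∅ = multilinear R P := by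
  simp [partialKer]

lemma qDeriv_eq_zero_of_mem_partialKer {c : α} (hc : c ∉ P) (hu : u ∈ partialKer q P C) :
    qDeriv q c u = 0 := by
  rw [mem_partialKer] at hu
  by_cases hcC : c ∈ C
  · exact hu.2 c hcC
  · exact qDeriv_eq_zero q (by simp [hc, hcC]) hu.1

lemma partialKer_insert_right_eq_inf :
    partialKer q P (insert a C) = partialKer q (insert a P) C ⊓ LinearMap.ker (qDeriv q a) := by
  ext u
  simp only [mem_partialKer, Submodule.mem_inf, LinearMap.mem_ker, Finset.union_insert,
    Finset.insert_union, Finset.forall_mem_insert]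
  tauto

lemma partialKer_insert_right_le : partialKer q P (insert a C) ≤ partialKer q (insert a P) C :=
  partialKer_insert_right_eq_inf.trans_le inf_le_left

lemma qDeriv_mem_partialKer (hP : ∀ p ∈ P, p < a) (hC : ∀ c ∈ C, a < c)
    (hu : u ∈ partialKer q (insert a P) C) : qDeriv q a u ∈ partialKer q P C := by
  rw [mem_partialKer, Finset.insert_union] at hu
  have ha : a ∉ P ∪ C := fun h =>
    (Finset.mem_union.1 h).elim (fun h => (hP a h).false) (fun h => (hC a h).false)
  refine mem_partialKer.2 ⟨?_, fun c hc => ?_⟩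
  · simpa [Finset.erase_insert ha] using qDeriv_mem_multilinear q a hu.1
  · rw [qDeriv_comm q hu.1 (hC c hc), hu.2 c hc, map_zero, smul_zero]

lemma ι_mul_mem_partialKer (hP : ∀ p ∈ P, p < a) (hC : ∀ c ∈ C, a < c)
    (hu : u ∈ partialKer q P C) : FreeAlgebra.ι R a * u ∈ partialKer q (insert a P) C := by
  rw [mem_partialKer] at hu
  have ha : a ∉ P ∪ C := fun h =>
    (Finset.mem_union.1 h).elim (fun h => (hP a h).false) (fun h => (hC a h).false)
  refine mem_partialKer.2 ⟨?_, fun c hc => ?_⟩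
  · simpa [Finset.insert_union] using ι_mul_mem_multilinear ha hu.1
  · rw [qDeriv_ι_mul_of_gt q (hC c hc), hu.2 c hc, mul_zero]

lemma qDeriv_ι_mul_of_mem_partialKer (hP : ∀ p ∈ P, p < a) (hu : u ∈ partialKer q P C) :
    qDeriv q a (FreeAlgebra.ι R a * u) = u := by
  have hsum : ∑ c ∈ Finset.Ioi a, FreeAlgebra.ι R c * qDeriv q c u = 0 :=
    Finset.sum_eq_zero fun c hc => by
      rw [qDeriv_eq_zero_of_mem_partialKer (fun h => (hP c h).not_gt (Finset.mem_Ioi.1 hc)) hu,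
        mul_zero]
  rw [qDeriv_ι_mul_self, hsum, smul_zero, add_zero]

/-- The derivation `∂ₐ` with respect to the largest letter `a` of `P ∪ {a}`, as a map between
partial kernels. -/
def qDerivPartialKer (q : R) (hP : ∀ p ∈ P, p < a) (hC : ∀ c ∈ C, a < c) :
    partialKer q (insert a P) C →ₗ[R] partialKer q P C :=
  (qDeriv q a).restrict fun _ => qDeriv_mem_partialKer hP hC

lemma qDerivPartialKer_surjective (hP : ∀ p ∈ P, p < a) (hC : ∀ c ∈ C, a < c) :
    Function.Surjective (qDerivPartialKer q hP hC) := fun u =>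
  ⟨⟨_, ι_mul_mem_partialKer hP hC u.2⟩, Subtype.ext (qDeriv_ι_mul_of_mem_partialKer hP u.2)⟩

lemma exact_inclusion_qDerivPartialKer (hP : ∀ p ∈ P, p < a) (hC : ∀ c ∈ C, a < c) :
    Function.Exact (Submodule.inclusion (partialKer_insert_right_le (q := q)))
      (qDerivPartialKer q hP hC) := by
  rw [LinearMap.exact_iff, Submodule.range_inclusion, partialKer_insert_right_eq_inf]
  ext u
  simp [qDerivPartialKer, ← Subtype.coe_inj]

section Operator

variable [Fintype α]

lemma tsetlinOp_mem_partialKer (y : α → R) (hPC : ∀ p ∈ P, ∀ c ∈ C, p < c)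
    (hu : u ∈ partialKer q P C) : tsetlinOp q y u ∈ partialKer q P C := by
  have hu' := mem_partialKer.1 hu
  refine mem_partialKer.2 ⟨tsetlinOp_mem_multilinear q y hu'.1, fun c hc => ?_⟩
  have hgt (d : α) (hcd : c < d) : qDeriv q d u = 0 :=
    qDeriv_eq_zero_of_mem_partialKer (fun hd => (hPC d hd c hc).not_gt hcd) hu
  rw [qDeriv_tsetlinOp q y hu'.1 hgt, hu'.2 c hc, smul_zero, map_zero, add_zero]

/-- The operator `z + tsetlinOp q y`, restricted to a partial kernel. The scalar `z` accumulates
the eigenvalue contributions along the filtration by partial kernels. -/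
def partialOp (q : R) (hPC : ∀ p ∈ P, ∀ c ∈ C, p < c) (z : R) (y : α → R) :
    Module.End R (partialKer q P C) :=
  algebraMap R _ z + (tsetlinOp q y).restrict fun _ => tsetlinOp_mem_partialKer y hPC

lemma coe_partialOp_apply (hPC : ∀ p ∈ P, ∀ c ∈ C, p < c) (z : R) (y : α → R)
    (u : partialKer q P C) :
    (partialOp q hPC z y u : FreeAlgebra R α) = z • (u : FreeAlgebra R α) + tsetlinOp q y u := rfl

lemma partialOp_comp_inclusion (hP : ∀ p ∈ P, p < a) (hC : ∀ c ∈ C, a < c) (z : R)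
    (y : α → R) :
    partialOp q (forall_insert_lt hP hC) z y ∘ₗ Submodule.inclusion partialKer_insert_right_le =
      Submodule.inclusion partialKer_insert_right_le ∘ₗ
        partialOp q (forall_lt_insert hP hC) z y := by
  refine LinearMap.ext fun u => Subtype.ext ?_
  rw [LinearMap.comp_apply, LinearMap.comp_apply, coe_partialOp_apply, Submodule.coe_inclusion,
    Submodule.coe_inclusion, coe_partialOp_apply]

lemma qDerivPartialKer_comp_partialOp (hP : ∀ p ∈ P, p < a) (hC : ∀ c ∈ C, a < c) (z : R)
    (y : α → R) :
    qDerivPartialKer q hP hC ∘ₗ partialOp q (forall_insert_lt hP hC) z y =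
      partialOp q (forall_lt_of_lt_of_lt hP hC) (z + y a) (q • y) ∘ₗ qDerivPartialKer q hP hC := by
  ext u
  have hgt (c : α) (hac : a < c) : qDeriv q c (u : FreeAlgebra R α) = 0 := by
    refine qDeriv_eq_zero_of_mem_partialKer (fun hc => ?_) u.2
    rcases Finset.mem_insert.1 hc with rfl | hc
    exacts [hac.false, (hP c hc).not_gt hac]
  change qDeriv q a (z • (u : FreeAlgebra R α) + tsetlinOp q y u) =
    (z + y a) • qDeriv q a u + tsetlinOp q (q • y) (qDeriv q a u)
  rw [map_add, map_smul, qDeriv_tsetlinOp q y (mem_partialKer.1 u.2).1 hgt, add_smul, add_assoc]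

lemma partialOp_empty_left (hC : ∀ p ∈ (∅ : Finset α), ∀ c ∈ C, p < c) (z : R) (y : α → R) :
    partialOp q hC z y = algebraMap R _ z := by
  ext u
  have hzero : tsetlinOp q y (u : FreeAlgebra R α) = 0 := by
    rw [tsetlinOp_apply]
    refine Finset.sum_eq_zero fun a _ => ?_
    rw [qDeriv_eq_zero_of_mem_partialKer (Finset.notMem_empty a) u.2, mul_zero, smul_zero]
  rw [coe_partialOp_apply, hzero, add_zero]
  rfl

end Operator

end PartialKernels

section Spectrum

section Eigenvalues

variable {R α : Type*} [CommRing R] [LinearOrder α]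

/-- The eigenvalue of the Tsetlin operator with weights `y` attached to a set `S` of letters. -/
def tsetlinEigenvalue (q : R) (y : α → R) (S : Finset α) : R :=
  ∑ a ∈ S, y a * q ^ (S.filter (a < ·)).card

@[simp]
lemma tsetlinEigenvalue_empty (q : R) (y : α → R) : tsetlinEigenvalue q y ∅ = 0 := rfl

lemma tsetlinEigenvalue_insert (q : R) (y : α → R) {S : Finset α} {a : α} (hS : ∀ s ∈ S, s < a) :
    tsetlinEigenvalue q y (insert a S) = y a + tsetlinEigenvalue q (q • y) S := by
  have ha : a ∉ S := fun h => (hS a h).false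
  have htop : (insert a S).filter (a < ·) = ∅ := by
    simpa [Finset.filter_eq_empty_iff] using fun s hs => (hS s hs).le
  have hstep (s : α) (hs : s ∈ S) :
      ((insert a S).filter (s < ·)).card = (S.filter (s < ·)).card + 1 := by
    rw [Finset.filter_insert, if_pos (hS s hs),
      Finset.card_insert_of_notMem fun h => ha (Finset.mem_filter.1 h).1]
  rw [tsetlinEigenvalue, Finset.sum_insert ha, htop, Finset.card_empty, pow_zero, mul_one,
    tsetlinEigenvalue]
  congr 1
  refine Finset.sum_congr rfl fun s hs => ?_
  rw [hstep s hs, Pi.smul_apply, smul_eq_mul]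
  ring

end Eigenvalues

variable {F α : Type*} [Field F] [LinearOrder α] [LocallyFiniteOrderTop α] {q : F}
  {P C : Finset α}

instance : Module.Finite F (partialKer q P C) :=
  Submodule.finiteDimensional_of_le inf_le_left

lemma finrank_partialKer_insert {a : α} (hP : ∀ p ∈ P, p < a) (hC : ∀ c ∈ C, a < c) :
    Module.finrank F (partialKer q (insert a P) C) =
      Module.finrank F (partialKer q P C) + Module.finrank F (partialKer q P (insert a C)) := by
  rw [← LinearMap.finrank_range_add_finrank_ker (qDerivPartialKer q hP hC),
    LinearMap.range_eq_top.2 (qDerivPartialKer_surjective hP hC), finrank_top,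
    (exact_inclusion_qDerivPartialKer hP hC).linearMap_ker_eq,
    LinearMap.finrank_range_of_inj (Submodule.inclusion_injective _)]

lemma finrank_partialKer (hPC : ∀ p ∈ P, ∀ c ∈ C, p < c) :
    (Module.finrank F (partialKer q P C) : ℤ) =
      (fwdDiff 1)^[C.card] (fun k : ℕ => (k.factorial : ℤ)) P.card := by
  induction C using Finset.induction_on_min generalizing P with
  | empty => rw [partialKer_empty_right, finrank_multilinear]; rfl
  | insert a C hC ih =>
    have haC : a ∉ C := fun h => (hC a h).false
    have hP (p : α) (hp : p ∈ P) : p < a := hPC p hp a (Finset.mem_insert_self a C)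
    have haP : a ∉ P := fun h => (hP a h).false
    have hdim := finrank_partialKer_insert (q := q) hP hC
    rw [Finset.card_insert_of_notMem haC, Function.iterate_succ_apply', fwdDiff,
      ← Finset.card_insert_of_notMem haP, ← ih (forall_insert_lt hP hC),
      ← ih (forall_lt_of_lt_of_lt hP hC), hdim]
    push_cast
    ring

lemma finrank_partialKer_empty_left :
    Module.finrank F (partialKer q ∅ C) = (derangeNum C.card).toNat := by
  rw [← fwdDiff_iter_factorial, ← Finset.card_empty (α := α),
    ← finrank_partialKer (q := q) (P := ∅) (C := C) (by simp), Int.toNat_natCast]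

variable [Fintype α]

lemma charpoly_partialOp (hPC : ∀ p ∈ P, ∀ c ∈ C, p < c) (z : F) (y : α → F) :
    (partialOp q hPC z y).charpoly = ∏ S ∈ P.powerset,
      (Polynomial.X - Polynomial.C (z + tsetlinEigenvalue q y S)) ^
        (derangeNum (P.card + C.card - S.card)).toNat := by
  induction P using Finset.induction_on_max generalizing C z y with
  | empty => simp [partialOp_empty_left, charpoly_algebraMap, finrank_partialKer_empty_left]
  | insert a P hP ih =>
    have haP : a ∉ P := fun h => (hP a h).false
    have hC : ∀ c ∈ C, a < c := hPC a (Finset.mem_insert_self a P)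
    have haC : a ∉ C := fun h => (hC a h).false
    rw [charpoly_eq_mul_of_exact (Submodule.inclusion_injective _)
      (exact_inclusion_qDerivPartialKer hP hC) (qDerivPartialKer_surjective hP hC)
      (partialOp_comp_inclusion hP hC z y) (qDerivPartialKer_comp_partialOp hP hC z y),
      ih (forall_lt_insert hP hC), ih (forall_lt_of_lt_of_lt hP hC),
      Finset.prod_powerset_insert haP, Finset.card_insert_of_notMem haP,
      Finset.card_insert_of_notMem haC, Nat.add_right_comm, ← add_assoc]
    congr 1
    refine Finset.prod_congr rfl fun S hS => ?_
    rw [Finset.mem_powerset] at hS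
    rw [tsetlinEigenvalue_insert q y fun s hs => hP s (hS hs), add_assoc,
      Finset.card_insert_of_notMem fun h => haP (hS h), Nat.add_sub_add_right]

lemma aeval_partialOp_prod_X_sub_C (hPC : ∀ p ∈ P, ∀ c ∈ C, p < c) (z : F) (y : α → F) :
    Polynomial.aeval (partialOp q hPC z y) (∏ S ∈ P.powerset,
      (Polynomial.X - Polynomial.C (z + tsetlinEigenvalue q y S))) = 0 := by
  induction P using Finset.induction_on_max generalizing C z y with
  | empty => simp [partialOp_empty_left]
  | insert a P hP ih =>
    have hC : ∀ c ∈ C, a < c := hPC a (Finset.mem_insert_self a P)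
    rw [Finset.prod_powerset_insert fun h => (hP a h).false]
    refine aeval_mul_eq_zero_of_exact (exact_inclusion_qDerivPartialKer hP hC)
      (partialOp_comp_inclusion hP hC z y) (qDerivPartialKer_comp_partialOp hP hC z y)
      (ih (forall_lt_insert hP hC) z y) ?_
    convert ih (forall_lt_of_lt_of_lt hP hC) (z + y a) (q • y) using 2
    refine Finset.prod_congr rfl fun S hS => ?_
    rw [tsetlinEigenvalue_insert q y fun s hs => hP s (Finset.mem_powerset.1 hS hs), add_assoc]

end Spectrum

section Hecke

section Generators

variable {R α : Type*} [CommRing R] [LinearOrder α] (q : R)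

/-- The values of the Hecke generator `heckeOp` on words. -/
def heckeWord : ℕ → List α → FreeAlgebra R α
  | 0, a :: b :: l =>
    if b < a then q • word R (b :: a :: l)
    else word R (b :: a :: l) + (q - 1) • word R (a :: b :: l)
  | k + 1, a :: l => FreeAlgebra.ι R a * heckeWord k l
  | _, _ => 0

/-- The Hecke generator acting on the letters in positions `k` and `k + 1` (counted from `0`) of a
word; words that are too short are sent to `0`. -/
def heckeOp (k : ℕ) : Module.End R (FreeAlgebra R α) :=
  ofWords (heckeWord q k)

lemma heckeOp_succ_ι_mul (k : ℕ) (a : α) (u : FreeAlgebra R α) :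
    heckeOp q (k + 1) (FreeAlgebra.ι R a * u) = FreeAlgebra.ι R a * heckeOp q k u := by
  have h : heckeOp q (k + 1) ∘ₗ LinearMap.mulLeft R (FreeAlgebra.ι R a) =
      LinearMap.mulLeft R (FreeAlgebra.ι R a) ∘ₗ heckeOp q k :=
    hom_ext_word fun l => by simp [← word_cons, heckeOp, heckeWord]
  exact LinearMap.congr_fun h u

lemma heckeOp_zero_ι_mul_ι_mul (a b : α) (u : FreeAlgebra R α) :
    heckeOp q 0 (FreeAlgebra.ι R a * (FreeAlgebra.ι R b * u)) =
      if b < a then q • (FreeAlgebra.ι R b * (FreeAlgebra.ι R a * u))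
      else FreeAlgebra.ι R b * (FreeAlgebra.ι R a * u) +
        (q - 1) • (FreeAlgebra.ι R a * (FreeAlgebra.ι R b * u)) := by
  let L (a b : α) : Module.End R (FreeAlgebra R α) :=
    LinearMap.mulLeft R (FreeAlgebra.ι R a) ∘ₗ LinearMap.mulLeft R (FreeAlgebra.ι R b)
  have h : heckeOp q 0 ∘ₗ L a b = if b < a then q • L b a else L b a + (q - 1) • L a b :=
    hom_ext_word fun l => by
      split_ifs with hba <;> simp [L, ← word_cons, heckeOp, heckeWord, hba]
  have hu := LinearMap.congr_fun h u
  split_ifs at hu ⊢ <;> exact hu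

lemma heckeWord_eq {k : ℕ} {l : List α} (h : k + 1 < l.length) :
    heckeWord q k l =
      if l[k + 1] < l[k] then q • word R ((l.set k l[k + 1]).set (k + 1) l[k])
      else word R ((l.set k l[k + 1]).set (k + 1) l[k]) + (q - 1) • word R l := by
  induction k generalizing l with
  | zero =>
    match l, h with
    | a :: b :: l, _ => rfl
  | succ k ih =>
    match l, h with
    | a :: l, h =>
      rw [heckeWord, ih (Nat.succ_lt_succ_iff.1 h)]
      simp only [List.getElem_cons_succ, List.set_cons_succ, word_cons]
      split_ifs
      · rw [mul_smul_comm]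
      · rw [mul_add, mul_smul_comm]

/-- The product `T_k ⋯ T_1` of Hecke generators, acting from the right on words: `T_k` is applied
first. -/
def heckeProd : ℕ → Module.End R (FreeAlgebra R α)
  | 0 => LinearMap.id
  | k + 1 => heckeProd k ∘ₗ heckeOp q k

lemma heckeProd_succ_ι_mul (k : ℕ) (a : α) (u : FreeAlgebra R α) :
    heckeProd q (k + 1) (FreeAlgebra.ι R a * u) =
      heckeOp q 0 (FreeAlgebra.ι R a * heckeProd q k u) := by
  induction k generalizing u with
  | zero => rfl
  | succ k ih => rw [heckeProd, LinearMap.comp_apply, heckeOp_succ_ι_mul, ih]; rfl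

end Generators

section HeckeSum

variable {R α : Type*} [CommRing R] [LinearOrder α] [LocallyFiniteOrderTop α] [Fintype α] (q : R)

lemma sum_heckeOp_zero_ι_mul {b : α} {u : FreeAlgebra R α} (hb : qDeriv q b u = 0) :
    FreeAlgebra.ι R b * u +
        heckeOp q 0 (FreeAlgebra.ι R b * ∑ a, FreeAlgebra.ι R a * qDeriv q a u) =
      ∑ a, FreeAlgebra.ι R a * qDeriv q a (FreeAlgebra.ι R b * u) := by
  let t (a : α) := FreeAlgebra.ι R b * (FreeAlgebra.ι R a * qDeriv q a u)
  have hterm (a : α) : FreeAlgebra.ι R a * qDeriv q a (FreeAlgebra.ι R b * u) =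
      heckeOp q 0 (t a) - (if b < a then (q - 1) • t a else 0) +
        if a = b then FreeAlgebra.ι R b * u + (q - 1) • ∑ c ∈ Finset.Ioi b, t c else 0 := by
    rw [heckeOp_zero_ι_mul_ι_mul]
    rcases lt_trichotomy a b with hab | rfl | hba
    · simp [qDeriv_ι_mul_of_lt q hab, hab, hab.ne, hab.not_gt]
    · simp [qDeriv_ι_mul_self, hb, t, mul_add, Finset.mul_sum]
    · simp [qDeriv_ι_mul_of_gt q hba, hba, hba.ne', hba.not_gt, t]
  have hfilter : Finset.univ.filter (b < ·) = Finset.Ioi b := by ext c; simp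
  rw [Finset.sum_congr rfl fun a _ => hterm a, Finset.mul_sum, map_sum, Finset.sum_add_distrib,
    Finset.sum_sub_distrib, Finset.sum_ite_eq', if_pos (Finset.mem_univ b), ← Finset.sum_filter,
    hfilter, ← Finset.smul_sum]
  abel

lemma sum_heckeProd_word {l : List α} (hl : l.Nodup) :
    ∑ k ∈ Finset.range l.length, heckeProd q k (word R l) =
      ∑ a, FreeAlgebra.ι R a * qDeriv q a (word R l) := by
  induction l with
  | nil => simp
  | cons b l ih =>
    obtain ⟨hb, hl⟩ := List.nodup_cons.1 hl
    rw [word_cons, List.length_cons, Finset.sum_range_succ', ← sum_heckeOp_zero_ι_mul q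
      (qDeriv_word_eq_zero q hb), ← ih hl, Finset.mul_sum, map_sum, add_comm]
    simp only [heckeProd_succ_ι_mul]
    rfl

end HeckeSum

section HeadWeight

variable {R α : Type*} [CommRing R]

/-- The weighting operator: a nonempty word is multiplied by the weight of its first letter. The
value on the empty word is `0`, as in `XSn`. -/
def headWeight (y : α → R) : Module.End R (FreeAlgebra R α) :=
  ofWords fun
    | [] => 0
    | a :: l => y a • word R (a :: l)

lemma headWeight_one (y : α → R) : headWeight y 1 = 0 := by
  rw [← word_nil, headWeight, ofWords_word]

lemma headWeight_ι_mul (y : α → R) (a : α) (u : FreeAlgebra R α) :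
    headWeight y (FreeAlgebra.ι R a * u) = y a • (FreeAlgebra.ι R a * u) := by
  have h : headWeight y ∘ₗ LinearMap.mulLeft R (FreeAlgebra.ι R a) =
      y a • LinearMap.mulLeft R (FreeAlgebra.ι R a) :=
    hom_ext_word fun l => by simp [← word_cons, headWeight]
  exact LinearMap.congr_fun h u

variable [LinearOrder α] [LocallyFiniteOrderTop α] [Fintype α] (q : R)

lemma headWeight_sum_heckeProd_word (y : α → R) {l : List α} (hl : l.Nodup) :
    headWeight y (∑ k ∈ Finset.range l.length, heckeProd q k (word R l)) =
      tsetlinOp q y (word R l) := by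
  simp only [sum_heckeProd_word q hl, tsetlinOp_apply, map_sum, headWeight_ι_mul]

end HeadWeight

end Hecke

section RowRepresentation

section General

variable {R V ι : Type*} [CommRing R] [AddCommGroup V] [Module R V] [Fintype ι]

/-- The rows of `M` are the coordinates of the images under `f` of the vectors `b i`. -/
def RowRepresents (b : ι → V) (M : Matrix ι ι R) (f : Module.End R V) : Prop :=
  ∀ i, f (b i) = ∑ j, M i j • b j

namespace RowRepresents

variable {b : ι → V} {M N : Matrix ι ι R} {f g : Module.End R V}

lemma one [DecidableEq ι] : RowRepresents b (1 : Matrix ι ι R) LinearMap.id := fun i => by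
  simp [Matrix.one_apply]

lemma mul (hM : RowRepresents b M f) (hN : RowRepresents b N g) :
    RowRepresents b (M * N) (g ∘ₗ f) := fun i => by
  simp only [LinearMap.comp_apply, hM i, map_sum, map_smul, hN _, Finset.smul_sum,
    Matrix.mul_apply, Finset.sum_smul, smul_smul]
  exact Finset.sum_comm

lemma sum {κ : Type*} {s : Finset κ} {M : κ → Matrix ι ι R} {f : κ → Module.End R V}
    (h : ∀ k ∈ s, RowRepresents b (M k) (f k)) :
    RowRepresents b (∑ k ∈ s, M k) (∑ k ∈ s, f k) := fun i => by
  rw [LinearMap.sum_apply, Finset.sum_congr rfl fun k hk => h k hk i]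
  simp only [Matrix.sum_apply, Finset.sum_smul]
  exact Finset.sum_comm

lemma of_coe {p : Submodule R V} {b : ι → p} {g : Module.End R p}
    (h : RowRepresents (fun i => (b i : V)) M f) (hg : ∀ u, (g u : V) = f u) :
    RowRepresents b M g := fun i => Subtype.ext <| by
  rw [hg, h i]
  simp

lemma transpose_eq_toMatrix [DecidableEq ι] {b : Module.Basis ι R V} (h : RowRepresents b M f) :
    M.transpose = LinearMap.toMatrix b b f := by
  ext i j
  rw [Matrix.transpose_apply, LinearMap.toMatrix_apply, h j, Module.Basis.repr_sum_self]

end RowRepresents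

end General

/-- The one-line notation of a permutation, as a word. -/
def permWord (K : Type) [Field K] {n : ℕ} (π : Equiv.Perm (Fin n)) : FreeAlgebra K (Fin n) :=
  word K (List.ofFn π)

variable {n : ℕ}

lemma ofFn_mul_swap (i j : Fin n) (π : Equiv.Perm (Fin n)) :
    List.ofFn (π * Equiv.swap i j) = ((List.ofFn π).set i (π j)).set j (π i) := by
  refine List.ext_getElem (by simp) fun m hm _ => ?_
  rw [List.length_ofFn] at hm
  lift m to Fin n using hm
  simp only [List.getElem_set, List.getElem_ofFn, Fin.eta, Equiv.Perm.mul_apply,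
    Fin.val_inj]
  rcases eq_or_ne j m with rfl | hj
  · simp
  rcases eq_or_ne i m with rfl | hi
  · simp [hj]
  · simp [hi, hj, Equiv.swap_apply_of_ne_of_ne hi.symm hj.symm]

lemma rowRepresents_genMat (q : K) {k : ℕ} (hk : k + 1 < n) :
    RowRepresents (permWord K) (genMat n q k) (heckeOp q k) := fun π => by
  have hswap := ofFn_mul_swap ⟨k, Nat.lt_of_succ_lt hk⟩ ⟨k + 1, hk⟩ π
  rw [permWord, heckeOp, ofWords_word, heckeWord_eq q (by simpa using hk)]
  simp only [List.getElem_ofFn, ← hswap, genMat, dif_pos hk]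
  split_ifs
  · simp [permWord]
  · simp [permWord, add_smul, Finset.sum_add_distrib]

lemma rowRepresents_prodGen (q : K) {k : ℕ} (hk : k < n) :
    RowRepresents (permWord K) (prodGen n q k) (heckeProd q k) := by
  induction k with
  | zero => exact .one
  | succ k ih => exact (rowRepresents_genMat q hk).mul (ih (Nat.lt_of_succ_lt hk))

/-- The weights `x_a / q^{n-a}` by which `XSn` scales, on letters indexed from `0`. -/
def letterWeight (q : K) (x : Fin n → K) (a : Fin n) : K :=
  x a / q ^ (n - 1 - (a : ℕ))

lemma rowRepresents_XSn (q : K) (x : Fin n → K) :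
    RowRepresents (permWord K) (XSn n q x) (headWeight (letterWeight q x)) := fun π => by
  cases n with
  | zero => simp [permWord, headWeight_one, XSn]
  | succ n =>
    rw [permWord, List.ofFn_succ, word_cons, headWeight_ι_mul, ← word_cons, ← List.ofFn_succ]
    simp [XSn, permWord, letterWeight]

lemma rowRepresents_TSn (q : K) (x : Fin n → K) :
    RowRepresents (permWord K) (TSn n q x) (tsetlinOp q (letterWeight q x)) := fun π => by
  have hprod : RowRepresents (permWord K) (∑ k ∈ Finset.range n, prodGen n q k)
      (∑ k ∈ Finset.range n, heckeProd q k) :=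
    .sum fun k hk => rowRepresents_prodGen q (Finset.mem_range.1 hk)
  rw [TSn, ← hprod.mul (rowRepresents_XSn q x) π, permWord,
    ← headWeight_sum_heckeProd_word q _ (List.nodup_ofFn.2 π.injective), List.length_ofFn,
    LinearMap.comp_apply, LinearMap.sum_apply]

end RowRepresentation

section Transport

variable {n : ℕ}

lemma linearIndependent_permWord :
    LinearIndependent K (permWord K : Equiv.Perm (Fin n) → FreeAlgebra K (Fin n)) :=
  linearIndependent_word.comp _ (List.ofFn_injective.comp DFunLike.coe_injective)

lemma permWord_mem_partialKer (q : K) (π : Equiv.Perm (Fin n)) :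
    permWord K π ∈ partialKer q Finset.univ ∅ := by
  have huniv : (List.ofFn π).toFinset = Finset.univ := by
    ext a
    simpa using π.surjective a
  rw [partialKer_empty_right, ← huniv]
  exact word_mem_multilinear (List.nodup_ofFn.2 π.injective)

lemma linearIndependent_permWord_partialKer (q : K) :
    LinearIndependent K fun π : Equiv.Perm (Fin n) =>
      (⟨permWord K π, permWord_mem_partialKer q π⟩ : partialKer q Finset.univ ∅) :=
  .of_comp (partialKer q Finset.univ ∅).subtype linearIndependent_permWord

lemma card_perm_eq_finrank_partialKer (q : K) :
    Fintype.card (Equiv.Perm (Fin n)) =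
      Module.finrank K (partialKer q (Finset.univ : Finset (Fin n)) ∅) := by
  rw [partialKer_empty_right, finrank_multilinear, Fintype.card_perm, Finset.card_univ]

/-- The basis of permutations of the multilinear part with the full letter set, written
`partialKer q univ ∅` as required by `partialOp`. -/
def permBasis (q : K) :
    Module.Basis (Equiv.Perm (Fin n)) K (partialKer q (Finset.univ : Finset (Fin n)) ∅) :=
  basisOfLinearIndependentOfCardEqFinrank (linearIndependent_permWord_partialKer q)
    (card_perm_eq_finrank_partialKer q)

@[simp]
lemma coe_permBasis_apply (q : K) (π : Equiv.Perm (Fin n)) :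
    (permBasis q π : FreeAlgebra K (Fin n)) = permWord K π := by
  simp [permBasis]

/-- `∑ₐ yₐ a ∂ₐ` on the multilinear part of the free algebra with the full letter set; `TSn` is
the transpose of its matrix in the basis of permutations. -/
abbrev multilinearTsetlinOp (q : K) (x : Fin n → K) :
    Module.End K (partialKer q (Finset.univ : Finset (Fin n)) ∅) :=
  partialOp q (by simp) 0 (letterWeight q x)

lemma transpose_TSn (q : K) (x : Fin n → K) :
    (TSn n q x).transpose =
      LinearMap.toMatrix (permBasis q) (permBasis q) (multilinearTsetlinOp q x) := by
  refine RowRepresents.transpose_eq_toMatrix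
    (RowRepresents.of_coe (f := tsetlinOp q (letterWeight q x)) ?_ fun u => ?_)
  · simpa only [coe_permBasis_apply] using rowRepresents_TSn q x
  · rw [coe_partialOp_apply, zero_smul, zero_add]

lemma lambdaS_eq_tsetlinEigenvalue {q : K} (hq : q ≠ 0) (x : Fin n → K) (S : Finset (Fin n)) :
    lambdaS n q x S = tsetlinEigenvalue q (letterWeight q x) S := by
  refine Finset.sum_congr rfl fun a ha => ?_
  have hcard : (S.filter (a ≤ ·)).card = (S.filter (a < ·)).card + 1 := by
    have hinsert : S.filter (a ≤ ·) = insert a (S.filter (a < ·)) := by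
      ext t
      simp only [Finset.mem_filter, Finset.mem_insert, le_iff_eq_or_lt]
      aesop
    rw [hinsert, Finset.card_insert_of_notMem (by simp)]
  have hexp : (n : ℤ) - ((a : ℕ) + 1) - ((S.filter (a ≤ ·)).card : ℤ) + 1 =
      ((n - 1 - (a : ℕ) : ℕ) : ℤ) - ((S.filter (a < ·)).card : ℤ) := by
    have := a.isLt
    omega
  rw [hexp, zpow_sub₀ hq, zpow_natCast, zpow_natCast, letterWeight, div_div_eq_mul_div,
    div_mul_eq_mul_div]

end Transport

theorem qTsetlin_perm_charpoly_general (n : ℕ) {q : K} (hq : q ≠ 0) (x : Fin n → K) :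
    (Matrix.charpoly (TSn n q x) =
      ∏ S : Finset (Fin n),
        (Polynomial.X - Polynomial.C (lambdaS n q x S)) ^ (derangeNum (n - S.card)).toNat) ∧
    ((∀ S T : Finset (Fin n), lambdaS n q x S = lambdaS n q x T → S = T) →
      ∃ P D : Matrix (Equiv.Perm (Fin n)) (Equiv.Perm (Fin n)) K,
        IsUnit P.det ∧ D.IsDiag ∧ TSn n q x = P * D * P⁻¹) := by
  have hlambda (S : Finset (Fin n)) :
      0 + tsetlinEigenvalue q (letterWeight q x) S = lambdaS n q x S := by
    rw [zero_add, lambdaS_eq_tsetlinEigenvalue hq]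
  constructor
  · rw [← Matrix.charpoly_transpose, transpose_TSn, LinearMap.charpoly_toMatrix, charpoly_partialOp]
    simp only [hlambda, Finset.powerset_univ, Finset.card_univ, Fintype.card_fin,
      Finset.card_empty, add_zero]
  · intro hinj
    apply exists_eq_conj_isDiag_of_transpose
    rw [transpose_TSn]
    apply exists_toMatrix_eq_conj_isDiag_of_aeval_eq_zero (permBasis q) hinj Finset.univ
    simpa only [hlambda, Finset.powerset_univ] using
      aeval_partialOp_prod_X_sub_C (q := q) (P := Finset.univ) (C := ∅) (by simp) 0
        (letterWeight q x)

/-- For `n ≥ 1` and `q ≠ 0`, the characteristic polynomial of the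
`n!×n!` transition matrix of `T_{S_n}(q,x)` is `∏_{S ⊆ [n]} (t - λ_S(q,x))^{d_{n-|S|}}`;
moreover, if the `λ_S(q,x)` are pairwise distinct then `T_{S_n}(q,x)` is diagonalizable. -/
theorem qTsetlin_perm_charpoly (n : ℕ) (hn : 1 ≤ n) (q : ℂ) (hq : q ≠ 0)
    (x : Fin n → ℂ) :
    (Matrix.charpoly (TSn n q x) =
      ∏ S : Finset (Fin n),
        (Polynomial.X - Polynomial.C (lambdaS n q x S)) ^ (derangeNum (n - S.card)).toNat) ∧
    ((∀ S T : Finset (Fin n), lambdaS n q x S = lambdaS n q x T → S = T) →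
      ∃ P D : Matrix (Equiv.Perm (Fin n)) (Equiv.Perm (Fin n)) ℂ,
        IsUnit P.det ∧ D.IsDiag ∧ TSn n q x = P * D * P⁻¹) := by
  exact qTsetlin_perm_charpoly_general n hq x

end QTsetlin
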